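/- Let (R,m) be a Cohen–Macaulay local ring of dimension d and let I be an m-primary ideal of R. Let x_1,…,x_d,y be a minimal generating set of I, with J=(x_1,…,x_d) a reduction of I with reduction number r = r_J(I). Suppose that the initial forms x_1*,…,x_{d-1}* form a gr_I(R)-regular sequence. Then there is a form Y^{r+1} − Σ_i X_i F_i ∈ Q_{r+1}, induced by y^{r+1} ∈ JI^r, with F_i homogeneous of degree r, such that Q = (Y^{r+1} − Σ_i X_i F_i) + Q⟨r⟩; in particular rt(I) = r + 1. -/

import Mathlib

set_option synthInstance.maxHeartbeats 1000000
set_option maxHeartbeats 1000000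

open MvPolynomial

section Defs

variable {R : Type*} [CommRing R]

/-- The presentation of the Rees algebra of the ideal generated by `g`,
sending the `i`-th variable to `(g i) · t` inside `R[t]`. -/
noncomputable def reesPres {m : ℕ} (g : Fin m → R) :
    MvPolynomial (Fin m) R →ₐ[R] Polynomial R :=
  aeval fun i => Polynomial.C (g i) * Polynomial.X

/-- `Q`, the ideal of equations of the Rees algebra w.r.t. the generators `g`. -/
noncomputable def presKer {m : ℕ} (g : Fin m → R) : Ideal (MvPolynomial (Fin m) R) :=
  RingHom.ker (reesPres g)

/-- `Q⟨d⟩`, the subideal of `Q` generated by the homogeneous equations of degree at most `d`. -/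
noncomputable def presKerLe {m : ℕ} (g : Fin m → R) (d : ℕ) : Ideal (MvPolynomial (Fin m) R) :=
  Ideal.span {F | F ∈ presKer g ∧ ∃ k ≤ d, F.IsHomogeneous k}

/-- The ideal `I·R(I)` of the Rees algebra `R(I) = R[It] ⊆ R[t]`. -/
noncomputable def grIdeal (I : Ideal R) : Ideal (reesAlgebra I) :=
  Ideal.span ((algebraMap R (reesAlgebra I)) '' (I : Set R))

/-- The associated graded ring `gr_I(R) = ⊕ₙ Iⁿ/Iⁿ⁺¹`, realized as `R(I)/I·R(I)`. -/
abbrev GrRing (I : Ideal R) := reesAlgebra I ⧸ grIdeal I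

end Defs

/-!
Write `I = (x₁, …, x_d, y)`, `J = (x₁, …, x_d)` and `J_k = (x₁, …, x_k)`. Regularity of the initial
forms gives the Valabrega–Valla equalities `J_k ∩ Iⁿ⁺¹ = J_k Iⁿ` for `k < d`, and with the depth of
`R` also that `x₁, …, x_d` is a regular sequence; hence `(J_k : x_{k+1}) ∩ Iⁿ⁺¹ = J_k Iⁿ`.
By these equalities an equation of degree `n + 2` in the ideal `(X₁, …, X_d)` can be rewritten with
one `Xᵢ` fewer modulo equations of degree `n + 1`, so it lies in `Q⟨n + 1⟩`. An arbitrary equation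
of degree above `r` becomes one of this kind after subtracting a multiple of the monic form
`Y^{r+1} − ∑ Xᵢ Fᵢ` that expresses `y^{r+1} ∈ J I^r`. Conversely, by minimality of `r` the
`Y^k`-coefficient of an equation of degree `k ≤ r` lies in the maximal ideal, so the monic form is
not in `Q⟨r⟩`.
-/

section InitialSpan

variable {S : Type*} [CommRing S] {m : ℕ}

/-- The ideal `(f 0, …, f (k - 1))` generated by the first `k` members of a finite family,
and by all of them when `k` exceeds the size of the family. -/
def initialSpan (f : Fin m → S) (k : ℕ) : Ideal S :=
  Ideal.span (f '' {i | (i : ℕ) < k})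

lemma initialSpan_zero (f : Fin m → S) : initialSpan f 0 = ⊥ := by
  simp [initialSpan]

lemma setOf_val_lt_succ (i : Fin m) :
    {j : Fin m | (j : ℕ) < i + 1} = insert i {j : Fin m | (j : ℕ) < i} := by
  ext j
  simp only [Set.mem_ofPred_eq, Set.mem_insert_iff, Fin.ext_iff]
  omega

lemma initialSpan_succ (f : Fin m → S) (i : Fin m) :
    initialSpan f (i + 1) = initialSpan f i ⊔ Ideal.span {f i} := by
  rw [initialSpan, setOf_val_lt_succ, Set.image_insert_eq, Ideal.span_insert, sup_comm,
    initialSpan]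

lemma initialSpan_self (f : Fin m → S) : initialSpan f m = Ideal.span (Set.range f) := by
  simp [initialSpan]

lemma initialSpan_comp_castSucc (f : Fin (m + 1) → S) {k : ℕ} (hk : k ≤ m) :
    initialSpan (fun i : Fin m => f i.castSucc) k = initialSpan f k := by
  have hset : {j : Fin (m + 1) | (j : ℕ) < k} = Fin.castSucc '' {i : Fin m | (i : ℕ) < k} := by
    ext j
    simp only [Set.mem_ofPred_eq, Set.mem_image]
    exact ⟨fun hj => ⟨⟨j, hj.trans_le hk⟩, hj, rfl⟩, by rintro ⟨i, hi, rfl⟩; exact hi⟩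
  simp only [initialSpan, hset, Set.image_image]

lemma ofList_take_ofFn (f : Fin m → S) (k : ℕ) :
    Ideal.ofList ((List.ofFn f).take k) = initialSpan f k := by
  unfold Ideal.ofList initialSpan
  congr 1
  ext a
  simp only [List.mem_take_iff_getElem, List.getElem_ofFn, List.length_ofFn, Set.mem_image,
    Set.mem_ofPred_eq, lt_min_iff]
  constructor
  · rintro ⟨i, ⟨hik, him⟩, rfl⟩
    exact ⟨⟨i, him⟩, hik, rfl⟩
  · rintro ⟨i, hik, rfl⟩
    exact ⟨i, ⟨hik, i.2⟩, rfl⟩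

lemma isWeaklyRegular_take_ofFn_iff (f : Fin m → S) (k : ℕ) :
    RingTheory.Sequence.IsWeaklyRegular S ((List.ofFn f).take k) ↔
      ∀ i : Fin m, (i : ℕ) < k → IsSMulRegular (S ⧸ initialSpan f i) (f i) := by
  have htake {i : ℕ} (hi : i < k) :
      Ideal.ofList (((List.ofFn f).take k).take i) • (⊤ : Ideal S) = initialSpan f i := by
    rw [List.take_take, min_eq_left hi.le, ofList_take_ofFn, smul_eq_mul, Ideal.mul_top]
  rw [RingTheory.Sequence.isWeaklyRegular_iff]
  constructor
  · intro h i hik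
    have hi := h i (by simp [hik])
    rw [htake hik] at hi
    simpa using hi
  · intro h i hi
    have hik : i < k ∧ i < m := by simpa using hi
    rw [htake hik.1]
    simpa using h ⟨i, hik.2⟩ hik.1

end InitialSpan

section Depth

open CategoryTheory Abelian RingTheory.Sequence IsLocalRing Pointwise

universe u v

variable {R : Type u} [CommRing R] [IsLocalRing R]

lemma maximalIdeal_smul_top_lt_top (M : Type*) [AddCommGroup M] [Module R M] [Module.Finite R M]
    [Nontrivial M] : maximalIdeal R • (⊤ : Submodule R M) < ⊤ :=
  (Submodule.top_ne_ideal_smul_of_le_jacobson_annihilator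
    (maximalIdeal_le_jacobson _)).symm.lt_top

variable [IsNoetherianRing R]

-- Dimension shifting for `Ext(R/𝔪, -)` along `0 → M → M → M/wM → 0`, by Rees' theorem.
lemma exists_isRegular_quotSMulTop [Small.{v} R] {M : Type v} [AddCommGroup M] [Module R M]
    [Module.Finite R M] {w : R} (hw : w ∈ maximalIdeal R) (hreg : IsSMulRegular M w) {zs : List R}
    (hzs : ∀ z ∈ zs, z ∈ maximalIdeal R) (hzreg : IsRegular M zs) {n : ℕ}
    (hlen : zs.length = n + 1) :
    ∃ rs : List R, rs.length = n ∧ (∀ z ∈ rs, z ∈ maximalIdeal R) ∧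
      IsRegular (QuotSMulTop w M) rs := by
  have : Nontrivial M := hzreg.nontrivial
  have : Nontrivial (QuotSMulTop w M) := nontrivial_quotSMulTop_of_mem_maximalIdeal M hw
  have hreesM := (ModuleCat.exists_isRegular_tfae (maximalIdeal R) (n + 1) (ModuleCat.of R M)
    (maximalIdeal_smul_top_lt_top M)).out 1 3
  have hreesQuot := (ModuleCat.exists_isRegular_tfae (maximalIdeal R) n
    (ModuleCat.of R (QuotSMulTop w M)) (maximalIdeal_smul_top_lt_top _)).out 1 3
  have hext := hreesM.2 ⟨zs, hlen, hzs, hzreg⟩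
  refine hreesQuot.1 fun i hi => ?_
  have hzero_left := AddCommGrpCat.isZero_of_iff_subsingleton.mpr (hext i (by omega))
  have hzero_right := AddCommGrpCat.isZero_of_iff_subsingleton.mpr (hext (i + 1) (by omega))
  have hshort := IsSMulRegular.smulShortComplex_shortExact (M := ModuleCat.of R M) hreg
  exact AddCommGrpCat.subsingleton_of_isZero <| ShortComplex.Exact.isZero_of_both_zeros
    (Ext.covariant_sequence_exact₃' _ hshort i (i + 1) rfl)
    (hzero_left.eq_zero_of_src _) (hzero_right.eq_zero_of_tgt _)

lemma exists_isSMulRegular_quotient_ofList [Small.{v} R] {M : Type v} [AddCommGroup M]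
    [Module R M] [Module.Finite R M] {zs ws : List R} (hzs : ∀ z ∈ zs, z ∈ maximalIdeal R)
    (hzreg : IsRegular M zs) (hws : ∀ w ∈ ws, w ∈ maximalIdeal R) (hwreg : IsWeaklyRegular M ws)
    (hlen : ws.length < zs.length) :
    ∃ a ∈ maximalIdeal R, IsSMulRegular (M ⧸ (Ideal.ofList ws • ⊤ : Submodule R M)) a := by
  induction ws generalizing M zs with
  | nil =>
    obtain ⟨a, zs, rfl⟩ := List.exists_cons_of_length_pos hlen
    have hbot : (Ideal.ofList ([] : List R) • ⊤ : Submodule R M) = ⊥ := by simp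
    exact ⟨a, hzs a (by simp), ((Submodule.quotEquivOfEqBot _ hbot).isSMulRegular_congr a).2
      ((isRegular_cons_iff _ _ _).1 hzreg).1⟩
  | cons w ws ih =>
    rw [isWeaklyRegular_cons_iff] at hwreg
    simp only [List.forall_mem_cons, List.length_cons] at hws hlen
    obtain ⟨rs, hrs_len, hrs, hrs_reg⟩ :=
      exists_isRegular_quotSMulTop hws.1 hwreg.1 hzs hzreg (n := zs.length - 1) (by omega)
    obtain ⟨a, ha, ha_reg⟩ := ih hrs hrs_reg hws.2 hwreg.2 (by omega)
    exact ⟨a, ha,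
      ((Submodule.quotOfListConsSMulTopEquivQuotSMulTopInner M w ws).isSMulRegular_congr a).2
        ha_reg⟩

-- A zero divisor `x` modulo `K` lies in an associated prime of `R ⧸ K`, which then contains `I`
-- and hence `𝔪`.
lemma isSMulRegular_quotient_of_pow_le_sup {I K : Ideal R} (hI : I.radical = maximalIdeal R)
    {x : R} {n : ℕ} (hn : I ^ n ≤ K ⊔ Ideal.span {x}) {a : R} (ha : a ∈ maximalIdeal R)
    (ha_reg : IsSMulRegular (R ⧸ K) a) : IsSMulRegular (R ⧸ K) x := by
  by_contra hx
  obtain ⟨p, hp, hxp⟩ : ∃ p ∈ associatedPrimes R (R ⧸ K), x ∈ p := by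
    have : x ∈ {r : R | IsSMulRegular (R ⧸ K) r}ᶜ := hx
    simpa [← biUnion_associatedPrimes_eq_compl_regular] using this
  have hprime : p.IsPrime := IsAssociatedPrime.isPrime hp
  have hKp : K ≤ p := by
    simpa [Submodule.annihilator_top, Ideal.annihilator_quotient] using
      IsAssociatedPrime.annihilator_le hp
  have hIp : I ≤ p :=
    hprime.le_of_pow_le (hn.trans (sup_le hKp ((Ideal.span_singleton_le_iff_mem p).2 hxp)))
  have hap : a ∈ p := hprime.radical_le_iff.2 hIp (hI ▸ ha)
  have ha_compl : a ∈ {r : R | IsSMulRegular (R ⧸ K) r}ᶜ := by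
    rw [← biUnion_associatedPrimes_eq_compl_regular]
    exact Set.mem_biUnion hp hap
  exact ha_compl ha_reg

end Depth

section ValabregaValla

variable {R : Type*} [CommRing R] {I K : Ideal R} {x : R}

/-- The Valabrega–Valla condition `K ∩ Iⁿ⁺¹ = K Iⁿ` for all `n`, stated as the inclusion that does
not follow from `K ≤ I`. -/
def ValabregaValla (I K : Ideal R) : Prop :=
  ∀ n : ℕ, K ⊓ I ^ (n + 1) ≤ K * I ^ n

/-- The initial form of `x`, taken in degree one, is a nonzerodivisor on the quotient of `gr_I(R)`
by the degree-one initial forms of the elements of `K`, expressed degree by degree in `R`. -/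
def InitialFormRegular (I K : Ideal R) (x : R) : Prop :=
  ∀ n : ℕ, ∀ a ∈ I ^ n, x * a ∈ K * I ^ n ⊔ I ^ (n + 2) → a ∈ K ⊔ I ^ (n + 1)

/-- The condition `(K : x) ∩ Iⁿ⁺¹ = K Iⁿ` for all `n`, stated as the nontrivial inclusion: `x` is
regular modulo `K` on the positive part of the Rees algebra. -/
def IsRelRegular (I K : Ideal R) (x : R) : Prop :=
  ∀ n : ℕ, ∀ a ∈ I ^ (n + 1), x * a ∈ K → a ∈ K * I ^ n

lemma mul_mem_pow_succ (hx : x ∈ I) {n : ℕ} {a : R} (ha : a ∈ I ^ n) : x * a ∈ I ^ (n + 1) :=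
  pow_succ' I n ▸ Ideal.mul_mem_mul hx ha

lemma mem_of_forall_mem_sup_pow [IsNoetherianRing R] [IsLocalRing R] (hI : I ≠ ⊤) {a : R}
    (h : ∀ n : ℕ, a ∈ K ⊔ I ^ n) : a ∈ K := by
  have : IsHausdorff I (R ⧸ K) := IsHausdorff.of_isLocalRing I _ hI
  refine Ideal.Quotient.eq_zero_iff_mem.1 (IsHausdorff.haus this _ fun n => ?_)
  obtain ⟨b, hb, c, hc, rfl⟩ := Submodule.mem_sup.1 (h n)
  rw [SModEq.zero, map_add, Ideal.Quotient.eq_zero_iff_mem.2 hb, zero_add,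
    show Ideal.Quotient.mk K c = c • (1 : R ⧸ K) from (mul_one _).symm]
  exact Submodule.smul_mem_smul hc trivial

namespace ValabregaValla

lemma bot (I : Ideal R) : ValabregaValla I ⊥ := fun _ => by simp

lemma isRelRegular (hK : ValabregaValla I K) (hx : IsSMulRegular (R ⧸ K) x) :
    IsRelRegular I K x := fun n _ ha hxa =>
  hK n ⟨mem_of_isSMulRegular_quotient_of_smul_mem hx hxa, ha⟩

lemma mem_sup_span_mul_pow (hK : ValabregaValla I K) (hx : x ∈ I)
    (hreg : InitialFormRegular I K x) {n : ℕ} {a : R} (haK : a ∈ K ⊔ Ideal.span {x})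
    (ha : a ∈ I ^ (n + 1)) {k : ℕ} (hk : k ≤ n) : a ∈ K ⊔ Ideal.span {x} * I ^ k := by
  induction k with
  | zero => simpa using haK
  | succ k ih =>
    obtain ⟨c, hc, _, hxb, rfl⟩ := Submodule.mem_sup.1 (ih (by omega))
    obtain ⟨b, hb, rfl⟩ := Ideal.mem_span_singleton_mul.1 hxb
    have hcI : c ∈ I ^ (k + 1) := by
      simpa using sub_mem (Ideal.pow_le_pow_right (by omega) ha) (mul_mem_pow_succ hx hb)
    have hxb_mem : x * b ∈ K * I ^ k ⊔ I ^ (k + 2) := by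
      simpa using Submodule.add_mem_sup (neg_mem (hK k ⟨hc, hcI⟩))
        (Ideal.pow_le_pow_right (by omega : k + 2 ≤ n + 1) ha)
    obtain ⟨c', hc', b', hb', rfl⟩ := Submodule.mem_sup.1 (hreg k b hb hxb_mem)
    rw [mul_add, ← add_assoc]
    exact Submodule.add_mem_sup (add_mem hc (Ideal.mul_mem_left _ _ hc'))
      (Ideal.mul_mem_mul (Ideal.mem_span_singleton_self x) hb')

lemma sup_span_singleton (hK : ValabregaValla I K) (hx : x ∈ I)
    (hreg : InitialFormRegular I K x) : ValabregaValla I (K ⊔ Ideal.span {x}) := by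
  rintro n a ⟨haK, ha⟩
  obtain ⟨c, hc, _, hxb, rfl⟩ :=
    Submodule.mem_sup.1 (hK.mem_sup_span_mul_pow hx hreg haK ha le_rfl)
  obtain ⟨b, hb, rfl⟩ := Ideal.mem_span_singleton_mul.1 hxb
  have hcI : c ∈ I ^ (n + 1) := by simpa using sub_mem ha (mul_mem_pow_succ hx hb)
  rw [Ideal.sup_mul]
  exact Submodule.add_mem_sup (hK n ⟨hc, hcI⟩) hxb

lemma isSMulRegular_quotient [IsNoetherianRing R] [IsLocalRing R] (hK : ValabregaValla I K)
    (hI : I ≠ ⊤) (hx : x ∈ I) (hreg : InitialFormRegular I K x) : IsSMulRegular (R ⧸ K) x := by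
  rw [isSMulRegular_quotient_iff_mem_of_smul_mem]
  refine fun a hxa => mem_of_forall_mem_sup_pow hI fun n => ?_
  induction n with
  | zero => simp
  | succ n ih =>
    obtain ⟨c, hc, b, hb, rfl⟩ := Submodule.mem_sup.1 ih
    have hxb : x * b ∈ K := by
      simpa [mul_add] using sub_mem hxa (Ideal.mul_mem_left K x hc)
    exact add_mem (Submodule.mem_sup_left hc)
      (hreg n b hb (Submodule.mem_sup_left (hK n ⟨hxb, mul_mem_pow_succ hx hb⟩)))

end ValabregaValla

lemma valabregaValla_initialSpan {m : ℕ} {x : Fin m → R} {k : ℕ} (hx : ∀ i, x i ∈ I)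
    (hreg : ∀ i : Fin m, (i : ℕ) < k → InitialFormRegular I (initialSpan x i) (x i))
    (hk : k ≤ m) : ValabregaValla I (initialSpan x k) := by
  induction k with
  | zero => exact initialSpan_zero x ▸ .bot I
  | succ k ih =>
    rw [initialSpan_succ x ⟨k, hk⟩]
    exact (ih (fun i hi => hreg i (by omega)) (by omega)).sup_span_singleton (hx _)
      (hreg ⟨k, hk⟩ k.lt_succ_self)

end ValabregaValla

section AssociatedGraded

variable {R : Type*} [CommRing R] {I : Ideal R}

/-- The coefficients `a` of the monomials `a tⁿ` that lie in an ideal `L` of the Rees algebra. -/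
noncomputable def monomialIdeal (L : Ideal (reesAlgebra I)) (n : ℕ) : Ideal R :=
  ((L.restrictScalars R).map (reesAlgebra I).val.toLinearMap).comap (Polynomial.monomial n)

lemma mem_monomialIdeal {L : Ideal (reesAlgebra I)} {n : ℕ} {a : R} :
    a ∈ monomialIdeal L n ↔ ∃ f ∈ L, (f : Polynomial R) = Polynomial.monomial n a := Iff.rfl

lemma span_image_mul_pow_le_monomialIdeal {ι : Type*} {S : Set ι} {ξ : ι → reesAlgebra I}
    {x : ι → R} {j : ℕ} (hξ : ∀ i ∈ S, (ξ i : Polynomial R) = Polynomial.monomial j (x i))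
    (n : ℕ) :
    Ideal.span (x '' S) * I ^ n ≤ monomialIdeal (Ideal.span (ξ '' S)) (j + n) := by
  rw [← Ideal.span_eq (I ^ n), Ideal.span_mul_span', Ideal.span_le, Set.mul_subset_iff]
  rintro _ ⟨i, hi, rfl⟩ b hb
  refine mem_monomialIdeal.2 ⟨ξ i * ⟨Polynomial.monomial n b, reesAlgebra.monomial_mem.2 hb⟩,
    Ideal.mul_mem_right _ _ (Ideal.subset_span ⟨i, hi, rfl⟩), ?_⟩
  rw [Subalgebra.coe_mul, hξ i hi, Polynomial.monomial_mul_monomial]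

lemma pow_succ_le_monomialIdeal_grIdeal (I : Ideal R) (n : ℕ) :
    I ^ (n + 1) ≤ monomialIdeal (grIdeal I) n := by
  have h := span_image_mul_pow_le_monomialIdeal (I := I) (S := (I : Set R)) (x := id)
    (ξ := algebraMap R (reesAlgebra I)) (j := 0) (fun _ _ => rfl) n
  rwa [Set.image_id, Ideal.span_eq, ← pow_succ', zero_add] at h

/-- The elements of the Rees algebra whose coefficient of `tⁿ` lies in `K + Iⁿ⁺¹` for all `n`:
the kernel of `R(I) → ⊕ₙ R ⧸ (K + Iⁿ⁺¹)`. -/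
def coeffIdeal (I K : Ideal R) : Ideal (reesAlgebra I) where
  carrier := {f | ∀ n, (f : Polynomial R).coeff n ∈ K ⊔ I ^ (n + 1)}
  zero_mem' := by simp
  add_mem' hf hg n := by
    rw [Subalgebra.coe_add, Polynomial.coeff_add]
    exact add_mem (hf n) (hg n)
  smul_mem' c f hf n := by
    rw [smul_eq_mul, Subalgebra.coe_mul, Polynomial.coeff_mul]
    refine sum_mem fun p hp => ?_
    obtain ⟨u, hu, v, hv, huv⟩ := Submodule.mem_sup.1 (hf p.2)
    rw [← huv, mul_add, ← Finset.HasAntidiagonal.mem_antidiagonal.1 hp, add_assoc,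
      pow_add]
    exact Submodule.add_mem_sup (Ideal.mul_mem_left _ _ hu)
      (Ideal.mul_mem_mul ((mem_reesAlgebra_iff I _).1 c.2 p.1) hv)

lemma grIdeal_le_coeffIdeal (I K : Ideal R) : grIdeal I ≤ coeffIdeal I K := by
  refine Ideal.span_le.2 ?_
  rintro _ ⟨a, ha, rfl⟩ n
  change (Polynomial.C a).coeff n ∈ _
  rw [Polynomial.coeff_C]
  split_ifs with hn
  · subst hn
    exact Submodule.mem_sup_right (by simpa using ha)
  · exact zero_mem _

variable {ι : Type*} {S : Set ι} {ξ : ι → reesAlgebra I} {x : ι → R}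

lemma span_image_le_coeffIdeal {j : ℕ}
    (hξ : ∀ i ∈ S, (ξ i : Polynomial R) = Polynomial.monomial j (x i)) :
    Ideal.span (ξ '' S) ≤ coeffIdeal I (Ideal.span (x '' S)) := by
  refine Ideal.span_le.2 ?_
  rintro _ ⟨i, hi, rfl⟩ n
  rw [hξ i hi, Polynomial.coeff_monomial]
  split_ifs
  · exact Submodule.mem_sup_left (Ideal.subset_span ⟨i, hi, rfl⟩)
  · exact zero_mem _

lemma initialFormRegular_of_isSMulRegular
    (hξ : ∀ i, (ξ i : Polynomial R) = Polynomial.monomial 1 (x i)) {k : ι}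
    (hreg : IsSMulRegular
      (GrRing I ⧸ Ideal.span ((fun i => Ideal.Quotient.mk (grIdeal I) (ξ i)) '' S))
      (Ideal.Quotient.mk (grIdeal I) (ξ k))) :
    InitialFormRegular I (Ideal.span (x '' S)) (x k) := by
  intro n a ha hxa
  set L : Ideal (reesAlgebra I) := Ideal.span (ξ '' S) ⊔ grIdeal I
  have hcomap (f : reesAlgebra I) : Ideal.Quotient.mk (grIdeal I) f ∈
      Ideal.span ((fun i => Ideal.Quotient.mk (grIdeal I) (ξ i)) '' S) ↔ f ∈ L := by
    rw [← Set.image_image (Ideal.Quotient.mk (grIdeal I)) ξ, ← Ideal.map_span, ← Ideal.mem_comap,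
      Ideal.comap_map_of_surjective' _ Ideal.Quotient.mk_surjective, Ideal.mk_ker]
  have hmonomial : Ideal.span (x '' S) * I ^ n ⊔ I ^ (n + 2) ≤ monomialIdeal L (n + 1) := by
    refine sup_le (fun b hb => ?_) (fun b hb => ?_)
    · obtain ⟨f, hf, hfb⟩ := span_image_mul_pow_le_monomialIdeal (fun i _ => hξ i) n hb
      exact ⟨f, Submodule.mem_sup_left hf, add_comm n 1 ▸ hfb⟩
    · obtain ⟨f, hf, hfb⟩ := pow_succ_le_monomialIdeal_grIdeal I (n + 1) hb
      exact ⟨f, Submodule.mem_sup_right hf, hfb⟩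
  let f : reesAlgebra I := ⟨Polynomial.monomial n a, reesAlgebra.monomial_mem.2 ha⟩
  have hξf : ξ k * f ∈ L := by
    obtain ⟨h, hL, hh⟩ := mem_monomialIdeal.1 (hmonomial hxa)
    convert hL using 1
    refine Subtype.ext ?_
    rw [hh, Subalgebra.coe_mul, hξ, Polynomial.monomial_mul_monomial, add_comm]
  have hf : f ∈ L := (hcomap f).1 <|
    mem_of_isSMulRegular_quotient_of_smul_mem hreg ((hcomap (ξ k * f)).2 hξf)
  have hcoeff := sup_le (span_image_le_coeffIdeal fun i _ => hξ i) (grIdeal_le_coeffIdeal I _) hf n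
  rwa [Polynomial.coeff_monomial, if_pos rfl] at hcoeff

end AssociatedGraded

section Forms

variable {σ R : Type*} [CommRing R] {g : σ → R} {n : ℕ}

lemma isHomogeneous_iff_forall_degree_eq {F : MvPolynomial σ R} :
    F.IsHomogeneous n ↔ ∀ m, coeff m F ≠ 0 → m.degree = n := by
  simp only [IsHomogeneous, IsWeightedHomogeneous, Finsupp.degree_eq_weight_one]
  rfl

lemma exists_isHomogeneous_add_X_mul_eq {s : Set σ} {i : σ} {F : MvPolynomial σ R}
    (hF : F.IsHomogeneous (n + 1)) (hmem : F ∈ Ideal.span (X '' insert i s)) :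
    ∃ P G : MvPolynomial σ R, P ∈ Ideal.span (X '' s) ∧ P.IsHomogeneous (n + 1) ∧
      G.IsHomogeneous n ∧ P + X i * G = F := by
  have hmod {m : σ →₀ ℕ} (hm : coeff m (F.modMonomial (Finsupp.single i 1)) ≠ 0) :
      m i = 0 ∧ coeff m F ≠ 0 := by
    by_cases hle : Finsupp.single i 1 ≤ m
    · exact absurd (coeff_modMonomial_of_le F hle) hm
    · rw [coeff_modMonomial_of_not_le F hle] at hm
      rw [Finsupp.single_le_iff] at hle
      exact ⟨by omega, hm⟩
  rw [isHomogeneous_iff_forall_degree_eq] at hF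
  rw [mem_ideal_span_X_image] at hmem
  refine ⟨F.modMonomial (Finsupp.single i 1), F.divMonomial (Finsupp.single i 1),
    mem_ideal_span_X_image.2 fun m hm => ?_,
    isHomogeneous_iff_forall_degree_eq.2 fun m hm => hF m (hmod hm).2,
    isHomogeneous_iff_forall_degree_eq.2 fun m hm => ?_, modMonomial_add_divMonomial_single F i⟩
  · obtain ⟨hmi, hmF⟩ := hmod (mem_support_iff.1 hm)
    obtain ⟨j, rfl | hj, hmj⟩ := hmem m (mem_support_iff.2 hmF)
    · exact absurd hmi hmj
    · exact ⟨j, hj, hmj⟩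
  · rw [coeff_divMonomial] at hm
    have hdegree := hF _ hm
    rw [map_add, Finsupp.degree_single] at hdegree
    omega

lemma sub_monomial_mem_span_X_compl {F : MvPolynomial σ R} (hF : F.IsHomogeneous n) (i : σ) :
    F - monomial (Finsupp.single i n) (coeff (Finsupp.single i n) F) ∈
      Ideal.span (X '' {i}ᶜ) := by
  classical
  refine mem_ideal_span_X_image.2 fun m hm => ?_
  by_contra! hzero
  have hm_single : m = Finsupp.single i (m i) := by
    ext j
    rcases eq_or_ne j i with rfl | hj
    · simp
    · rw [hzero j hj, Finsupp.single_eq_of_ne hj]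
  have hdegree : m i = n := by
    have hm_degree := isHomogeneous_iff_forall_degree_eq.1
      (hF.sub (isHomogeneous_monomial _ (Finsupp.degree_single i n))) m (mem_support_iff.1 hm)
    rwa [hm_single, Finsupp.degree_single] at hm_degree
  rw [mem_support_iff, hm_single, hdegree] at hm
  simp at hm

lemma eval_mem_span_image_mul_pow {s : Set σ} {F : MvPolynomial σ R}
    (hF : F.IsHomogeneous (n + 1)) (hmem : F ∈ Ideal.span (X '' s)) :
    eval g F ∈ Ideal.span (g '' s) * Ideal.span (Set.range g) ^ n := by
  rw [F.as_sum, map_sum]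
  refine sum_mem fun m hm => ?_
  obtain ⟨j, hj, hmj⟩ := mem_ideal_span_X_image.1 hmem m hm
  obtain ⟨t, rfl⟩ : ∃ t, m = Finsupp.single j 1 + t :=
    exists_add_of_le (Finsupp.single_le_iff.2 (Nat.one_le_iff_ne_zero.2 hmj))
  have hdegree := isHomogeneous_iff_forall_degree_eq.1 hF _ (mem_support_iff.1 hm)
  rw [map_add, Finsupp.degree_single] at hdegree
  rw [monomial_single_add, map_mul, map_pow, eval_X, pow_one]
  exact Ideal.mul_mem_mul (Ideal.subset_span ⟨j, hj, rfl⟩)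
    ((Ideal.mem_span_pow_iff_exists_isHomogeneous g _).2
      ⟨_, isHomogeneous_monomial _ (by omega), rfl⟩)

lemma eval_sub_coeff_mul_pow_mem {F : MvPolynomial σ R} (hF : F.IsHomogeneous (n + 1)) (i : σ) :
    eval g F - coeff (Finsupp.single i (n + 1)) F * g i ^ (n + 1) ∈
      Ideal.span (g '' {i}ᶜ) * Ideal.span (Set.range g) ^ n := by
  have hmem := eval_mem_span_image_mul_pow (g := g)
    (hF.sub (isHomogeneous_monomial _ (Finsupp.degree_single i (n + 1))))
    (sub_monomial_mem_span_X_compl hF i)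
  simpa only [map_sub, eval_monomial, Finsupp.prod_single_index, pow_zero] using hmem

lemma span_range_pow_succ_eq_iff (g : σ → R) (i : σ) (n : ℕ) :
    Ideal.span (Set.range g) ^ (n + 1) = Ideal.span (g '' {i}ᶜ) * Ideal.span (Set.range g) ^ n ↔
      g i ^ (n + 1) ∈ Ideal.span (g '' {i}ᶜ) * Ideal.span (Set.range g) ^ n := by
  constructor
  · intro h
    exact h ▸ Ideal.pow_mem_pow (Ideal.subset_span (Set.mem_range_self i)) (n + 1)
  · intro h
    refine le_antisymm (fun a ha => ?_) ?_
    · obtain ⟨F, hF, rfl⟩ := (Ideal.mem_span_pow_iff_exists_isHomogeneous g a).1 ha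
      exact (Submodule.sub_mem_iff_left _ (Ideal.mul_mem_left _ _ h)).1
        (eval_sub_coeff_mul_pow_mem hF i)
    · rw [pow_succ']
      exact Ideal.mul_mono_left (Ideal.span_mono (Set.image_subset_range g _))

lemma exists_isHomogeneous_sum_mul_eval_eq {ι : Type*} [Fintype ι] {v : ι → R} {a : R}
    (ha : a ∈ Ideal.span (Set.range v) * Ideal.span (Set.range g) ^ n) :
    ∃ F : ι → MvPolynomial σ R, (∀ i, (F i).IsHomogeneous n) ∧ ∑ i, v i * eval g (F i) = a := by
  rw [mul_comm, ← smul_eq_mul, Submodule.mem_ideal_smul_span_iff_exists_sum] at ha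
  obtain ⟨c, hc, rfl⟩ := ha
  choose F hF hFc using fun i => (Ideal.mem_span_pow_iff_exists_isHomogeneous g _).1 (hc i)
  refine ⟨F, hF, ?_⟩
  rw [Finsupp.sum_fintype _ _ (by simp)]
  exact Finset.sum_congr rfl fun i _ => by rw [hFc, smul_eq_mul, mul_comm]

lemma exists_isHomogeneous_mem_span_X_eval_eq [Finite σ] {s : Set σ} {a : R}
    (ha : a ∈ Ideal.span (g '' s) * Ideal.span (Set.range g) ^ n) :
    ∃ F ∈ Ideal.span (X '' s), F.IsHomogeneous (n + 1) ∧ eval g F = a := by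
  have := Fintype.ofFinite s
  rw [Set.image_eq_range] at ha
  obtain ⟨F, hF, rfl⟩ := exists_isHomogeneous_sum_mul_eval_eq ha
  refine ⟨∑ i : s, X (i : σ) * F i, sum_mem fun i _ => ?_, .sum _ _ _ fun i _ => ?_, by simp⟩
  · exact Ideal.mul_mem_right _ _ (Ideal.subset_span ⟨i, i.2, rfl⟩)
  · exact add_comm n 1 ▸ (isHomogeneous_X R (i : σ)).mul (hF i)

lemma eval_piSingle_of_isHomogeneous [DecidableEq σ] {F : MvPolynomial σ R}
    (hF : F.IsHomogeneous n) (i : σ) :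
    eval (Pi.single i 1) F = coeff (Finsupp.single i n) F := by
  have hker : Ideal.span (X '' {i}ᶜ) ≤ RingHom.ker (eval (Pi.single i (1 : R))) := by
    rw [Ideal.span_le]
    rintro _ ⟨j, hj, rfl⟩
    simpa using Pi.single_eq_of_ne hj 1
  have heval := hker (sub_monomial_mem_span_X_compl hF i)
  rw [RingHom.mem_ker, map_sub, sub_eq_zero] at heval
  simpa [eval_monomial] using heval

end Forms

section Equations

variable {R : Type*} [CommRing R] {m : ℕ} {g : Fin m → R} {n : ℕ}

lemma reesPres_eq_monomial_eval {F : MvPolynomial (Fin m) R} (hF : F.IsHomogeneous n) :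
    reesPres g F = Polynomial.monomial n (eval g F) := by
  rw [F.as_sum, map_sum, map_sum, map_sum]
  refine Finset.sum_congr rfl fun s hs => ?_
  have hdegree : ∑ i, s i = n := by
    rw [← Finsupp.degree_eq_sum]
    exact isHomogeneous_iff_forall_degree_eq.1 hF s (mem_support_iff.1 hs)
  rw [reesPres, aeval_monomial, eval_monomial, Finsupp.prod_fintype _ _ fun _ => pow_zero _,
    Finsupp.prod_fintype _ _ fun _ => pow_zero _, ← Polynomial.C_mul_X_pow_eq_monomial, ← hdegree]
  simp only [mul_pow, Finset.prod_mul_distrib, Finset.prod_pow_eq_pow_sum,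
    Polynomial.algebraMap_eq, map_mul, map_prod, map_pow, mul_assoc]

lemma mem_presKer_iff_eval_eq_zero {F : MvPolynomial (Fin m) R} (hF : F.IsHomogeneous n) :
    F ∈ presKer g ↔ eval g F = 0 := by
  rw [presKer, RingHom.mem_ker, reesPres_eq_monomial_eval hF, Polynomial.monomial_eq_zero_iff]

lemma coeff_reesPres (F : MvPolynomial (Fin m) R) (n : ℕ) :
    (reesPres g F).coeff n = eval g (homogeneousComponent n F) := by
  conv_lhs => rw [← sum_homogeneousComponent F]
  simp only [map_sum, Polynomial.finsetSum_coeff, Polynomial.coeff_monomial,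
    reesPres_eq_monomial_eval (homogeneousComponent_isHomogeneous _ F), Finset.sum_ite_eq',
    Finset.mem_range]
  split_ifs with hn
  · rfl
  · rw [homogeneousComponent_eq_zero n F (by omega), map_zero]

lemma homogeneousComponent_mem_presKer {F : MvPolynomial (Fin m) R} (hF : F ∈ presKer g) (n : ℕ) :
    homogeneousComponent n F ∈ presKer g := by
  rw [mem_presKer_iff_eval_eq_zero (homogeneousComponent_isHomogeneous n F), ← coeff_reesPres,
    RingHom.mem_ker.1 hF, Polynomial.coeff_zero]

lemma mem_presKerLe {F : MvPolynomial (Fin m) R} (hF : F.IsHomogeneous n) (hFQ : F ∈ presKer g)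
    {k : ℕ} (hn : n ≤ k) : F ∈ presKerLe g k :=
  Ideal.subset_span ⟨hFQ, n, hn, hF⟩

lemma presKerLe_le_presKer (g : Fin m → R) (n : ℕ) : presKerLe g n ≤ presKer g :=
  Ideal.span_le.2 fun _ hF => hF.1

lemma presKerLe_mono (g : Fin m → R) : Monotone (presKerLe g) := fun _ _ h =>
  Ideal.span_mono fun _ ⟨hF, k, hk, hFk⟩ => ⟨hF, k, hk.trans h, hFk⟩

lemma mem_presKerLe_totalDegree {F : MvPolynomial (Fin m) R} (hF : F ∈ presKer g) :
    F ∈ presKerLe g F.totalDegree := by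
  rw [← sum_homogeneousComponent F]
  refine sum_mem fun k hk => mem_presKerLe (homogeneousComponent_isHomogeneous k _)
    (homogeneousComponent_mem_presKer hF k) ?_
  rw [sum_homogeneousComponent]
  exact Finset.mem_range_succ_iff.1 hk

-- Writing `F = P + Xᵢ G`, relative regularity puts the value of `G` into `(g '' s) Iⁿ`, where it is
-- also attained by a form `L` in `(X '' s)`; then `F = (P + Xᵢ L) + Xᵢ (G - L)`.
lemma exists_sub_mem_presKerLe {s : Set (Fin m)} {i : Fin m}
    (hrel : IsRelRegular (Ideal.span (Set.range g)) (Ideal.span (g '' s)) (g i))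
    {F : MvPolynomial (Fin m) R} (hF : F.IsHomogeneous (n + 2)) (hFQ : F ∈ presKer g)
    (hmem : F ∈ Ideal.span (X '' insert i s)) :
    ∃ P ∈ Ideal.span (X '' s), P.IsHomogeneous (n + 2) ∧ F - P ∈ presKerLe g (n + 1) := by
  obtain ⟨P, G, hPs, hP, hG, rfl⟩ := exists_isHomogeneous_add_X_mul_eq hF hmem
  have hGI : eval g G ∈ Ideal.span (Set.range g) ^ (n + 1) :=
    (Ideal.mem_span_pow_iff_exists_isHomogeneous g _).2 ⟨G, hG, rfl⟩
  have hcolon : g i * eval g G ∈ Ideal.span (g '' s) := by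
    have hPg : eval g P ∈ Ideal.span (g '' s) :=
      Ideal.mul_le_left (eval_mem_span_image_mul_pow hP hPs)
    have hsum : eval g P + g i * eval g G = 0 := by
      simpa using (mem_presKer_iff_eval_eq_zero hF).1 hFQ
    exact (eq_neg_of_add_eq_zero_right hsum) ▸ neg_mem hPg
  obtain ⟨L, hLs, hL, hLG⟩ := exists_isHomogeneous_mem_span_X_eval_eq (hrel n _ hGI hcolon)
  have hGL : G - L ∈ presKerLe g (n + 1) :=
    mem_presKerLe (hG.sub hL)
      ((mem_presKer_iff_eval_eq_zero (hG.sub hL)).2 (by rw [map_sub, hLG, sub_self])) le_rfl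
  refine ⟨P + X i * L, add_mem hPs (Ideal.mul_mem_left _ _ hLs),
    hP.add (by simpa [add_comm] using (isHomogeneous_X R i).mul hL), ?_⟩
  rw [add_sub_add_left_eq_sub, ← mul_sub]
  exact Ideal.mul_mem_left _ _ hGL

lemma mem_presKerLe_of_mem_initialSpan_X {k : ℕ} (hk : k ≤ m)
    (hrel : ∀ i : Fin m, (i : ℕ) < k →
      IsRelRegular (Ideal.span (Set.range g)) (initialSpan g i) (g i))
    {F : MvPolynomial (Fin m) R} (hF : F.IsHomogeneous (n + 2)) (hFQ : F ∈ presKer g)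
    (hmem : F ∈ initialSpan X k) : F ∈ presKerLe g (n + 1) := by
  induction k generalizing F with
  | zero =>
    rw [initialSpan_zero, Ideal.mem_bot] at hmem
    exact hmem ▸ zero_mem _
  | succ k ih =>
    rw [initialSpan, setOf_val_lt_succ ⟨k, hk⟩] at hmem
    obtain ⟨P, hPk, hP, hFP⟩ :=
      exists_sub_mem_presKerLe (hrel ⟨k, hk⟩ k.lt_succ_self) hF hFQ hmem
    have hPQ : P ∈ presKer g := by
      simpa using sub_mem hFQ (presKerLe_le_presKer g _ hFP)
    have hPle := ih (by omega) (fun i hi => hrel i (by omega)) hP hPQ hPk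
    simpa using add_mem hFP hPle

end Equations

section Generation

variable {R : Type*} [CommRing R] {d : ℕ} {g : Fin (d + 1) → R} {r : ℕ}
  {P : MvPolynomial (Fin (d + 1)) R}

lemma setOf_val_lt_eq_compl_last (d : ℕ) :
    {j : Fin (d + 1) | (j : ℕ) < d} = {Fin.last d}ᶜ := by
  ext j
  simp [← Fin.lt_last_iff_ne_last, Fin.lt_def]

lemma presKerLe_succ_le_span_singleton_sup (hr : 1 ≤ r)
    (hrel : ∀ i : Fin d,
      IsRelRegular (Ideal.span (Set.range g)) (initialSpan g i) (g i.castSucc))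
    (hP : P.IsHomogeneous (r + 1)) (hPQ : P ∈ presKer g)
    (hcoeff : coeff (Finsupp.single (Fin.last d) (r + 1)) P = 1) {n : ℕ} (hn : r ≤ n) :
    presKerLe g (n + 1) ≤ Ideal.span {P} ⊔ presKerLe g n := by
  obtain ⟨n, rfl⟩ := Nat.exists_eq_add_of_le' (hr.trans hn)
  refine Ideal.span_le.2 ?_
  rintro F ⟨hFQ, k, hk, hF⟩
  rcases hk.lt_or_eq with hlt | rfl
  · exact Submodule.mem_sup_right (mem_presKerLe hF hFQ (by omega))
  set c := coeff (Finsupp.single (Fin.last d) (n + 2)) F with hc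
  set T : MvPolynomial (Fin (d + 1)) R :=
    monomial (Finsupp.single (Fin.last d) (n + 1 - r)) c with hT
  have hTP : (T * P).IsHomogeneous (n + 2) := by
    convert (isHomogeneous_monomial c (Finsupp.degree_single (Fin.last d) (n + 1 - r))).mul hP
      using 1
    omega
  have hlead : coeff (Finsupp.single (Fin.last d) (n + 2)) (F - T * P) = 0 := by
    have hsplit : Finsupp.single (Fin.last d) (n + 2) =
        Finsupp.single (Fin.last d) (n + 1 - r) + Finsupp.single (Fin.last d) (r + 1) := by
      rw [← Finsupp.single_add]
      congr 1
      omega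
    rw [coeff_sub, ← hc, hsplit, hT, coeff_monomial_mul, hcoeff, mul_one, sub_self]
  have hmem : F - T * P ∈ initialSpan X d := by
    have hsub := sub_monomial_mem_span_X_compl (hF.sub hTP) (Fin.last d)
    rwa [hlead, map_zero, sub_zero, ← setOf_val_lt_eq_compl_last] at hsub
  have hlow := mem_presKerLe_of_mem_initialSpan_X (Nat.le_succ d)
    (fun i hi => hrel ⟨i, hi⟩) (hF.sub hTP) (sub_mem hFQ (Ideal.mul_mem_left _ T hPQ)) hmem
  have hTP_mem : T * P ∈ Ideal.span {P} :=
    Ideal.mul_mem_left _ _ (Ideal.mem_span_singleton_self P)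
  simpa using Submodule.add_mem_sup hTP_mem hlow

theorem presKer_eq_span_singleton_sup_presKerLe (hr : 1 ≤ r)
    (hrel : ∀ i : Fin d,
      IsRelRegular (Ideal.span (Set.range g)) (initialSpan g i) (g i.castSucc))
    (hP : P.IsHomogeneous (r + 1)) (hPQ : P ∈ presKer g)
    (hcoeff : coeff (Finsupp.single (Fin.last d) (r + 1)) P = 1) :
    presKer g = Ideal.span {P} ⊔ presKerLe g r := by
  have hle (n : ℕ) : presKerLe g (r + n) ≤ Ideal.span {P} ⊔ presKerLe g r := by
    induction n with
    | zero => exact le_sup_right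
    | succ n ih =>
      exact (presKerLe_succ_le_span_singleton_sup hr hrel hP hPQ hcoeff
        (Nat.le_add_right r n)).trans (sup_le le_sup_left ih)
  refine le_antisymm (fun F hF => hle F.totalDegree ?_)
    (sup_le ((Ideal.span_singleton_le_iff_mem _).2 hPQ) (presKerLe_le_presKer g r))
  exact presKerLe_mono g (by omega) (mem_presKerLe_totalDegree hF)

end Generation

section RelationType

variable {R : Type*} [CommRing R] {m : ℕ} {g : Fin m → R} {i : Fin m} {r : ℕ}

lemma pow_mem_of_isUnit_coeff {F : MvPolynomial (Fin m) R} {k : ℕ}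
    (hF : F.IsHomogeneous (k + 1)) (hFQ : F ∈ presKer g)
    (hunit : IsUnit (coeff (Finsupp.single i (k + 1)) F)) :
    g i ^ (k + 1) ∈ Ideal.span (g '' {i}ᶜ) * Ideal.span (Set.range g) ^ k := by
  rw [← Ideal.unit_mul_mem_iff_mem _ hunit]
  have hmem := eval_sub_coeff_mul_pow_mem (g := g) hF i
  rwa [(mem_presKer_iff_eval_eq_zero hF).1 hFQ, zero_sub, neg_mem_iff] at hmem

variable [IsLocalRing R]

lemma coeff_mem_maximalIdeal
    (hpow : ∀ k < r, g i ^ (k + 1) ∉ Ideal.span (g '' {i}ᶜ) * Ideal.span (Set.range g) ^ k)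
    {F : MvPolynomial (Fin m) R} {k : ℕ} (hF : F.IsHomogeneous k) (hFQ : F ∈ presKer g)
    (hk : k ≤ r) : coeff (Finsupp.single i k) F ∈ IsLocalRing.maximalIdeal R := by
  cases k with
  | zero =>
    have hconst := totalDegree_eq_zero_iff_eq_C.1 ((totalDegree_zero_iff_isHomogeneous _).2 hF)
    have heval := (mem_presKer_iff_eval_eq_zero hF).1 hFQ
    rw [hconst, eval_C] at heval
    rw [Finsupp.single_zero, heval]
    exact zero_mem _
  | succ k =>
    by_contra hunit
    rw [IsLocalRing.notMem_maximalIdeal] at hunit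
    exact hpow k hk (pow_mem_of_isUnit_coeff hF hFQ hunit)

-- Specializing `Xᵢ ↦ 1` and the other variables to `0` kills `Q⟨r⟩` modulo `𝔪` but not `P`.
lemma notMem_presKerLe
    (hpow : ∀ k < r, g i ^ (k + 1) ∉ Ideal.span (g '' {i}ᶜ) * Ideal.span (Set.range g) ^ k)
    {P : MvPolynomial (Fin m) R} (hP : P.IsHomogeneous (r + 1))
    (hcoeff : coeff (Finsupp.single i (r + 1)) P = 1) : P ∉ presKerLe g r := by
  set ρ := (IsLocalRing.residue R).comp (eval (Pi.single i 1)) with hρ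
  have hle : presKerLe g r ≤ RingHom.ker ρ := by
    refine Ideal.span_le.2 ?_
    rintro F ⟨hFQ, k, hk, hF⟩
    simpa [ρ, eval_piSingle_of_isHomogeneous hF] using coeff_mem_maximalIdeal hpow hF hFQ hk
  have hρP : ρ P = 1 := by
    rw [hρ, RingHom.comp_apply, eval_piSingle_of_isHomogeneous hP, hcoeff, map_one]
  exact fun hmem => one_ne_zero (hρP ▸ RingHom.mem_ker.1 (hle hmem))

theorem isLeast_relationType
    (hpow : ∀ k < r, g i ^ (k + 1) ∉ Ideal.span (g '' {i}ᶜ) * Ideal.span (Set.range g) ^ k)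
    {P : MvPolynomial (Fin m) R} (hP : P.IsHomogeneous (r + 1)) (hPQ : P ∈ presKer g)
    (hcoeff : coeff (Finsupp.single i (r + 1)) P = 1)
    (hgen : presKer g = Ideal.span {P} ⊔ presKerLe g r) :
    IsLeast {N : ℕ | 1 ≤ N ∧ presKer g = presKerLe g N} (r + 1) := by
  refine ⟨⟨by omega, le_antisymm ?_ (presKerLe_le_presKer g _)⟩, fun N hN => ?_⟩
  · rw [hgen, sup_le_iff, Ideal.span_singleton_le_iff_mem]
    exact ⟨mem_presKerLe hP hPQ le_rfl, presKerLe_mono g r.le_succ⟩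
  · by_contra! hlt
    exact notMem_presKerLe hpow hP hcoeff (presKerLe_mono g (by omega) (hN.2 ▸ hPQ))

end RelationType

section ReductionEquation

variable {R : Type*} [CommRing R] {d n : ℕ}

lemma span_image_compl_last (g : Fin (d + 1) → R) :
    Ideal.span (g '' {Fin.last d}ᶜ) = Ideal.span (Set.range fun i : Fin d => g i.castSucc) := by
  rw [← setOf_val_lt_eq_compl_last, ← initialSpan_self, initialSpan_comp_castSucc g le_rfl]
  rfl

lemma isHomogeneous_X_pow_sub_sum {F : Fin d → MvPolynomial (Fin (d + 1)) R}
    (hF : ∀ i, (F i).IsHomogeneous n) :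
    (X (Fin.last d) ^ (n + 1) - ∑ i : Fin d, X i.castSucc * F i).IsHomogeneous (n + 1) := by
  refine (isHomogeneous_X_pow _ _).sub (.sum _ _ _ fun i _ => ?_)
  exact add_comm n 1 ▸ (isHomogeneous_X R i.castSucc).mul (hF i)

lemma coeff_last_X_pow_sub_sum (F : Fin d → MvPolynomial (Fin (d + 1)) R) (n : ℕ) :
    coeff (Finsupp.single (Fin.last d) n)
      (X (Fin.last d) ^ n - ∑ i : Fin d, X i.castSucc * F i) = 1 := by
  have hzero (i : Fin d) : coeff (Finsupp.single (Fin.last d) n) (X i.castSucc * F i) = 0 := by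
    rw [coeff_X_mul', if_neg]
    simp
  simp [coeff_sub, coeff_sum, hzero, coeff_X_pow]

lemma exists_X_pow_sub_sum_mem_presKer {g : Fin (d + 1) → R}
    (hpow : g (Fin.last d) ^ (n + 1) ∈
      Ideal.span (Set.range fun i : Fin d => g i.castSucc) * Ideal.span (Set.range g) ^ n) :
    ∃ F : Fin d → MvPolynomial (Fin (d + 1)) R, (∀ i, (F i).IsHomogeneous n) ∧
      X (Fin.last d) ^ (n + 1) - ∑ i : Fin d, X i.castSucc * F i ∈ presKer g := by
  obtain ⟨F, hF, hsum⟩ := exists_isHomogeneous_sum_mul_eval_eq hpow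
  refine ⟨F, hF, (mem_presKer_iff_eval_eq_zero (isHomogeneous_X_pow_sub_sum hF)).2 ?_⟩
  simp [hsum]

end ReductionEquation

section CohenMacaulay

open RingTheory.Sequence IsLocalRing

variable {R : Type*} [CommRing R] [IsNoetherianRing R] [IsLocalRing R] {d : ℕ} {I : Ideal R}
  {x : Fin d → R}

-- All but the last `x i` are covered by the Valabrega–Valla condition; the last one by depth.
lemma isSMulRegular_quotient_initialSpan {z : Fin d → R} (hz : ∀ i, z i ∈ maximalIdeal R)
    (hzreg : IsRegular R (List.ofFn z)) (hI : I.radical = maximalIdeal R) (hx : ∀ i, x i ∈ I)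
    {n : ℕ} (hn : I ^ n ≤ Ideal.span (Set.range x))
    (hreg : ∀ i : Fin d, (i : ℕ) < d - 1 → InitialFormRegular I (initialSpan x i) (x i))
    (i : Fin d) : IsSMulRegular (R ⧸ initialSpan x i) (x i) := by
  have hIm : I ≤ maximalIdeal R := hI ▸ Ideal.le_radical
  have hI_top : I ≠ ⊤ := ne_top_of_le_ne_top (maximalIdeal.isMaximal R).ne_top hIm
  have hlt (j : Fin d) (hj : (j : ℕ) < d - 1) : IsSMulRegular (R ⧸ initialSpan x j) (x j) :=
    (valabregaValla_initialSpan hx (fun k hk => hreg k (hk.trans hj)) j.2.le).isSMulRegular_quotient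
      hI_top (hx j) (hreg j hj)
  rcases lt_or_ge (i : ℕ) (d - 1) with hi | hi
  · exact hlt i hi
  have hx_mem : ∀ w ∈ (List.ofFn x).take i, w ∈ maximalIdeal R := fun w hw => by
    obtain ⟨j, rfl⟩ := (List.mem_ofFn' _ _).1 (List.mem_of_mem_take hw)
    exact hIm (hx j)
  obtain ⟨a, ha, ha_reg⟩ := exists_isSMulRegular_quotient_ofList (zs := List.ofFn z)
    (by simpa using hz) hzreg hx_mem
    ((isWeaklyRegular_take_ofFn_iff x i).2 fun j hj => hlt j (by omega)) (by simp)
  rw [ofList_take_ofFn, smul_eq_mul, Ideal.mul_top] at ha_reg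
  refine isSMulRegular_quotient_of_pow_le_sup hI (n := n) ?_ ha ha_reg
  rwa [← initialSpan_succ, show (i : ℕ) + 1 = d by omega, initialSpan_self]

lemma isRelRegular_initialSpan {z : Fin d → R} (hz : ∀ i, z i ∈ maximalIdeal R)
    (hzreg : IsRegular R (List.ofFn z)) (hI : I.radical = maximalIdeal R)
    {n : ℕ} (hn : I ^ n ≤ Ideal.span (Set.range x)) {ξ : Fin d → reesAlgebra I}
    (hξ : ∀ i, (ξ i : Polynomial R) = Polynomial.C (x i) * Polynomial.X)
    (hgr : IsWeaklyRegular (GrRing I)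
      ((List.ofFn fun i => Ideal.Quotient.mk (grIdeal I) (ξ i)).take (d - 1)))
    (i : Fin d) : IsRelRegular I (initialSpan x i) (x i) := by
  have hx (j : Fin d) : x j ∈ I := by
    simpa [hξ] using (mem_reesAlgebra_iff I _).1 (ξ j).2 1
  have hξ_monomial (j : Fin d) : (ξ j : Polynomial R) = Polynomial.monomial 1 (x j) := by
    rw [hξ, Polynomial.C_mul_X_eq_monomial]
  have hreg (j : Fin d) (hj : (j : ℕ) < d - 1) : InitialFormRegular I (initialSpan x j) (x j) :=
    initialFormRegular_of_isSMulRegular hξ_monomial ((isWeaklyRegular_take_ofFn_iff _ _).1 hgr j hj)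
  exact (valabregaValla_initialSpan hx (fun j hj => hreg j (by omega)) i.2.le).isRelRegular
    (isSMulRegular_quotient_initialSpan hz hzreg hI hx hn hreg i)

end CohenMacaulay

/-- Let `(R,m)` be a Cohen–Macaulay local ring of dimension `d` (encoded by
`dim R = d` together with the existence of a regular sequence of length `d` in `m`),
`I` an `m`-primary ideal with minimal generating set `x₁,…,x_d,y`, `J = (x₁,…,x_d)` a
reduction of `I` with reduction number `r`, and suppose the initial forms
`x₁*,…,x_{d-1}*` form a `gr_I(R)`-regular sequence.  Then
`Q = (Y^{r+1} − ∑ Xᵢ Fᵢ) + Q⟨r⟩` for forms `Fᵢ` of degree `r`; in particular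
`rt(I) = r + 1`. -/
theorem statement5 {R : Type*} [CommRing R] [IsNoetherianRing R] [IsLocalRing R]
    (d : ℕ) (hdim : ringKrullDim R = (d : WithBot (WithTop ℕ)))
    (hCM : ∃ z : Fin d → R, (∀ i, z i ∈ IsLocalRing.maximalIdeal R) ∧
      RingTheory.Sequence.IsRegular R (List.ofFn z))
    (I : Ideal R) (hprim : I.radical = IsLocalRing.maximalIdeal R)
    (x : Fin d → R) (y : R) (r : ℕ)
    (J : Ideal R) (hJ : J = Ideal.span (Set.range x))
    (hgen : I = Ideal.span (Set.range (Fin.snoc x y)))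
    (hmin : ∀ i : Fin (d + 1), I ≠ Ideal.span (Fin.snoc x y '' {j | j ≠ i}))
    (hred : IsLeast {k : ℕ | I ^ (k + 1) = J * I ^ k} r)
    (ξ : Fin d → reesAlgebra I)
    (hξ : ∀ i, (ξ i : Polynomial R) = Polynomial.C (x i) * Polynomial.X)
    (hgrreg : RingTheory.Sequence.IsRegular (GrRing I)
      ((List.ofFn fun i => Ideal.Quotient.mk (grIdeal I) (ξ i)).take (d - 1))) :
    (∃ F : Fin d → MvPolynomial (Fin (d + 1)) R, (∀ i, (F i).IsHomogeneous r) ∧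
      (X (Fin.last d) ^ (r + 1) - ∑ i, X i.castSucc * F i) ∈ presKer (Fin.snoc x y) ∧
      presKer (Fin.snoc x y)
        = Ideal.span {X (Fin.last d) ^ (r + 1) - ∑ i, X i.castSucc * F i}
            ⊔ presKerLe (Fin.snoc x y) r) ∧
    IsLeast {N : ℕ | 1 ≤ N ∧ presKer (Fin.snoc x y) = presKerLe (Fin.snoc x y) N} (r + 1) := by
  obtain ⟨z, hz, hzreg⟩ := hCM
  have hrel := isRelRegular_initialSpan hz hzreg hprim
    (hred.1.le.trans (Ideal.mul_le_left.trans hJ.le)) hξ hgrreg.toIsWeaklyRegular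
  obtain ⟨g, hg⟩ : ∃ g : Fin (d + 1) → R, Fin.snoc x y = g := ⟨_, rfl⟩
  obtain rfl : (fun i : Fin d => g i.castSucc) = x := by simp [← hg]
  rw [hg] at hgen hmin ⊢
  subst hgen
  have hJ_compl : Ideal.span (g '' {Fin.last d}ᶜ) = J := (span_image_compl_last g).trans hJ.symm
  have hpow (k : ℕ) := span_range_pow_succ_eq_iff g (Fin.last d) k
  rw [hJ_compl] at hpow
  have hr : 1 ≤ r := Nat.one_le_iff_ne_zero.2 fun hr =>
    hmin (Fin.last d) (Eq.trans (by simpa [hr] using hred.1) hJ_compl.symm)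
  obtain ⟨F, hF, hPQ⟩ := exists_X_pow_sub_sum_mem_presKer (hJ ▸ (hpow r).1 hred.1)
  have hP := isHomogeneous_X_pow_sub_sum hF
  have hcoeff := coeff_last_X_pow_sub_sum F (r + 1)
  have hQ := presKer_eq_span_singleton_sup_presKerLe hr
    (fun i => initialSpan_comp_castSucc g i.2.le ▸ hrel i) hP hPQ hcoeff
  refine ⟨⟨F, hF, hPQ, hQ⟩, isLeast_relationType (fun k hk hmem => ?_) hP hPQ hcoeff hQ⟩
  exact hk.not_ge (hred.2 ((hpow k).2 (hJ_compl ▸ hmem)))
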